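/- Let G be a connected {K_{1,3}, Z_2, N}-free graph which contains H_7 as an induced subgraph, say with vertices labeled y_1,…,y_8 as in the definition of H_7, and write H for this induced copy. Then for each vertex a ∈ V(G) − V(H) with N_G(a) ∩ V(H) ≠ ∅, we have N_G(a) ∩ V(H) = {y_1, y_2, y_7, y_8}; consequently G[V(H) ∪ {a}] ≅ H_8. -/

import Mathlib

open SimpleGraph

def graphOfList (n : ℕ) (E : List (Fin n × Fin n)) : SimpleGraph (Fin n) :=
  SimpleGraph.fromRel (fun a b => (a, b) ∈ E)

/-- The claw `K_{1,3}`, with center `0`. -/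
def K13 : SimpleGraph (Fin 4) := graphOfList 4 [(0,1), (0,2), (0,3)]

/-- `Z_k = N_{k,0,0}`: a triangle `0,1,2` together with a path of length `k`
attached at the vertex `2`. -/
def Zgraph (k : ℕ) : SimpleGraph (Fin (k + 3)) :=
  SimpleGraph.fromRel (fun a b =>
    (a.val = 0 ∧ b.val = 1) ∨ (a.val = 0 ∧ b.val = 2) ∨ (a.val = 1 ∧ b.val = 2) ∨
    (2 ≤ a.val ∧ b.val = a.val + 1))

/-- The net `N = N_{1,1,1}`: a triangle `0,1,2` with pendant vertices `3,4,5`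
attached to `0,1,2` respectively. -/
def Ngraph : SimpleGraph (Fin 6) :=
  graphOfList 6 [(0,1), (0,2), (1,2), (0,3), (1,4), (2,5)]

/-- `G` contains `H` as an induced subgraph. -/
def ContainsInduced {V W : Type*} (G : SimpleGraph V) (H : SimpleGraph W) : Prop :=
  Nonempty (H ↪g G)

/-- The graph `H₇` with vertices `y₁,…,y₈` encoded as `0,…,7`. -/
def HGraph7 : SimpleGraph (Fin 8) :=
  graphOfList 8 [(0,1), (0,2), (0,4), (1,3), (1,5), (2,3), (2,4), (2,6), (3,5), (3,6),
    (4,5), (4,7), (5,7), (6,7)]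

/-- The graph `H₈`: `H₇` together with a new vertex `y₉ = 8` adjacent to exactly
`y₁,y₂,y₇,y₈`. -/
def HGraph8 : SimpleGraph (Fin 9) :=
  graphOfList 9 [(0,1), (0,2), (0,4), (1,3), (1,5), (2,3), (2,4), (2,6), (3,5), (3,6),
    (4,5), (4,7), (5,7), (6,7), (8,0), (8,1), (8,6), (8,7)]

/-!
`H₇` is the rook's graph `K₃ □ K₃` with one cell deleted: in the grid

    y₁ y₃ y₅
    y₂ y₄ y₆
     · y₇ y₈

two vertices are adjacent exactly when they share a row or a column, and the claim is that `a` fills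
the empty cell. A claw centred at a neighbour of `a` shows that the neighbours of `a` in `H₇` form a
union of lines of the grid, and a claw centred at `a` shows that they contain no three cells in
pairwise distinct rows and columns. If `a` were joined to a full line, `Z₂`-freeness would force
such a triple. So only the two short lines `y₁y₂` and `y₇y₈` are left, and `Z₂`-freeness shows that
each of them forces the other.
-/

section Forbidden

variable {V W : Type*} {G : SimpleGraph V} {H : SimpleGraph W}

lemma containsInduced_of_lt [LinearOrder W] (v : W → V)
    (hv : ∀ i j, i < j → v i ≠ v j ∧ (G.Adj (v i) (v j) ↔ H.Adj i j)) :
    ContainsInduced G H := by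
  have hinj : Function.Injective v := .of_lt_imp_ne fun i j hij => (hv i j hij).1
  refine ⟨⟨⟨v, hinj⟩, ?_⟩⟩
  intro i j
  change G.Adj (v i) (v j) ↔ H.Adj i j
  rcases lt_trichotomy i j with hij | rfl | hji
  · exact (hv i j hij).2
  · simp only [SimpleGraph.irrefl]
  · rw [G.adj_comm, H.adj_comm, (hv j i hji).2]

lemma not_indep_of_clawFree (hK13 : ¬ ContainsInduced G K13) {c x y z : V}
    (hcx : G.Adj c x) (hcy : G.Adj c y) (hcz : G.Adj c z) (hxy : Gᶜ.Adj x y) (hxz : Gᶜ.Adj x z) :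
    ¬ Gᶜ.Adj y z := by
  intro hyz
  rw [compl_adj] at hxy hxz hyz
  refine hK13 (containsInduced_of_lt ![c, x, y, z] ?_)
  simp [Fin.forall_fin_succ, K13, graphOfList, hcx, hcy, hcz, hcx.ne, hcy.ne, hcz.ne, hxy, hxz, hyz]

/-- `u, v, w, x` are the consecutive vertices of an induced path `P₄` of `G`; a further
vertex adjacent to exactly `u` and `v` extends it to an induced `Z₂`. Distinctness of the four
vertices follows from the listed adjacencies and non-adjacencies. -/
def IsInducedP4 (G : SimpleGraph V) (u v w x : V) : Prop :=
  G.Adj u v ∧ G.Adj v w ∧ G.Adj w x ∧ ¬ G.Adj u w ∧ ¬ G.Adj u x ∧ ¬ G.Adj v x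

instance [DecidableRel G.Adj] (u v w x : V) : Decidable (IsInducedP4 G u v w x) :=
  inferInstanceAs (Decidable (_ ∧ _))

lemma IsInducedP4.map (f : H ↪g G) {u v w x : W} (h : IsInducedP4 H u v w x) :
    IsInducedP4 G (f u) (f v) (f w) (f x) := by
  simpa only [IsInducedP4, f.map_adj_iff] using h

lemma adj_or_adj_of_isInducedP4 (hZ2 : ¬ ContainsInduced G (Zgraph 2)) {a u v w x : V}
    (hP : IsInducedP4 G u v w x) (hau : G.Adj a u) (hav : G.Adj a v) :
    G.Adj a w ∨ G.Adj a x := by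
  obtain ⟨huv, hvw, hwx, huw, hux, hvx⟩ := hP
  by_contra! ⟨haw, hax⟩
  have hne_aw : a ≠ w := fun h => hax (h ▸ hwx)
  have hne_ax : a ≠ x := fun h => haw (h ▸ hwx.symm)
  have hne_uw : u ≠ w := fun h => hux (h ▸ hwx)
  have hne_ux : u ≠ x := fun h => huw (h ▸ hwx.symm)
  have hne_vx : v ≠ x := fun h => hux (h ▸ huv)
  refine hZ2 (containsInduced_of_lt ![a, u, v, w, x] ?_)
  simp [Fin.forall_fin_succ, Zgraph, hau, hav, huv, hvw, hwx, haw, hax, huw, hux, hvx,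
    hau.ne, hav.ne, huv.ne, hvw.ne, hwx.ne, hne_aw, hne_ax, hne_uw, hne_ux, hne_vx]

end Forbidden

section OneVertexExtension

variable {V W : Type*} {G : SimpleGraph V} {H : SimpleGraph W} {f : H ↪g G} {a : V}

lemma compl_adj_of_notMem_range (ha : a ∉ Set.range f) {x : W} (hx : ¬ G.Adj a (f x)) :
    Gᶜ.Adj a (f x) :=
  (G.compl_adj _ _).2 ⟨fun h => ha ⟨x, h.symm⟩, hx⟩

lemma adj_or_adj_of_adj_center (hK13 : ¬ ContainsInduced G K13) (ha : a ∉ Set.range f) {c x y : W}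
    (hcx : H.Adj c x) (hcy : H.Adj c y) (hxy : Hᶜ.Adj x y) (hac : G.Adj a (f c)) :
    G.Adj a (f x) ∨ G.Adj a (f y) := by
  by_contra! ⟨hax, hay⟩
  exact not_indep_of_clawFree hK13 hac.symm (f.map_adj_iff.2 hcx) (f.map_adj_iff.2 hcy)
    (compl_adj_of_notMem_range ha hax) (compl_adj_of_notMem_range ha hay)
    ((Embedding.complEquiv f).map_adj_iff.2 hxy)

lemma not_adj_of_indep (hK13 : ¬ ContainsInduced G K13) {x y z : W}
    (hxy : Hᶜ.Adj x y) (hxz : Hᶜ.Adj x z) (hyz : Hᶜ.Adj y z)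
    (hax : G.Adj a (f x)) (hay : G.Adj a (f y)) : ¬ G.Adj a (f z) := fun haz =>
  let g := Embedding.complEquiv f
  not_indep_of_clawFree hK13 hax hay haz
    (g.map_adj_iff.2 hxy) (g.map_adj_iff.2 hxz) (g.map_adj_iff.2 hyz)

lemma nonempty_iso_induce_range_union_singleton {n : ℕ} {H : SimpleGraph (Fin n)}
    {K : SimpleGraph (Fin (n + 1))} {f : H ↪g G} (ha : a ∉ Set.range f)
    (hH : ∀ i j, K.Adj i.castSucc j.castSucc ↔ H.Adj i j)
    (hK : ∀ i, K.Adj (Fin.last n) i.castSucc ↔ G.Adj a (f i)) :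
    Nonempty (G.induce (Set.range f ∪ {a}) ≃g K) := by
  let e : Fin (n + 1) → V := Fin.snoc f a
  have hinj : Function.Injective e := Fin.snoc_injective_iff.2 ⟨f.injective, ha⟩
  have hadj (i j : Fin (n + 1)) : G.Adj (e i) (e j) ↔ K.Adj i j := by
    induction i using Fin.lastCases <;> induction j using Fin.lastCases <;>
      simp [e, hH, hK, G.adj_comm _ a, K.adj_comm _ (Fin.last n)]
  have hrange : Set.range e = Set.range f ∪ {a} := by
    rw [Fin.range_snoc, Set.union_singleton]
  let g : K ↪g G := ⟨⟨e, hinj⟩, hadj _ _⟩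
  exact hrange ▸ ⟨g.isoInduceRange.symm⟩

end OneVertexExtension

section HGraph7

instance (n : ℕ) (E : List (Fin n × Fin n)) : DecidableRel (graphOfList n E).Adj :=
  inferInstanceAs (DecidableRel (SimpleGraph.fromRel _).Adj)

instance : DecidableRel HGraph7.Adj := inferInstanceAs (DecidableRel (graphOfList 8 _).Adj)

instance : DecidableRel HGraph8.Adj := inferInstanceAs (DecidableRel (graphOfList 9 _).Adj)

/-- The automorphism of `H₇` exchanging the rows `y₁y₃y₅` and `y₂y₄y₆` of the grid. -/
def HGraph7.swapRows : HGraph7 ≃g HGraph7 where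
  toEquiv := c[0, 1] * c[2, 3] * c[4, 5]
  map_rel_iff' {i j} := by revert i j; decide

/-- The automorphism of `H₇` exchanging the row and the column through `y₃`, with `y₃` fixed. -/
def HGraph7.transpose : HGraph7 ≃g HGraph7 where
  toEquiv := c[0, 6] * c[1, 7] * c[3, 4]
  map_rel_iff' {i j} := by revert i j; decide

lemma HGraph7.exists_iso_apply_two_of_degree_eq_four {i : Fin 8} (hi : HGraph7.degree i = 4) :
    ∃ φ : HGraph7 ≃g HGraph7, φ 2 = i := by
  have h : i = 2 ∨ i = 3 ∨ i = 4 ∨ i = 5 := by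
    revert i
    decide
  rcases h with rfl | rfl | rfl | rfl
  · exact ⟨.refl, rfl⟩
  · exact ⟨swapRows, rfl⟩
  · exact ⟨swapRows.trans transpose, rfl⟩
  · exact ⟨(swapRows.trans transpose).trans swapRows, rfl⟩

lemma HGraph8.adj_castSucc_castSucc :
    ∀ i j : Fin 8, HGraph8.Adj i.castSucc j.castSucc ↔ HGraph7.Adj i j := by
  decide

lemma HGraph8.adj_last_castSucc :
    ∀ j : Fin 8, HGraph8.Adj (Fin.last 8) j.castSucc ↔ j = 0 ∨ j = 1 ∨ j = 6 ∨ j = 7 := by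
  decide

end HGraph7

section Neighbors

variable {V : Type*} {G : SimpleGraph V} {a : V}

lemma not_adj_four_of_adj_zero_of_adj_two (hK13 : ¬ ContainsInduced G K13)
    (hZ2 : ¬ ContainsInduced G (Zgraph 2)) (f : HGraph7 ↪g G) (h₀ : G.Adj a (f 0))
    (h₂ : G.Adj a (f 2)) : ¬ G.Adj a (f 4) := by
  intro h₄
  have row_two : G.Adj a (f 6) ∨ G.Adj a (f 7) :=
    adj_or_adj_of_isInducedP4 hZ2 (.map f (u := 0) (v := 2) (by decide)) h₀ h₂
  rcases row_two with h₆ | h₇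
  · have h₁ : ¬ G.Adj a (f 1) :=
      not_adj_of_indep hK13 (by decide) (by decide) (by decide) h₄ h₆
    have h₅ : ¬ G.Adj a (f 5) :=
      not_adj_of_indep hK13 (by decide) (by decide) (by decide) h₀ h₆
    have row_one : G.Adj a (f 1) ∨ G.Adj a (f 5) :=
      adj_or_adj_of_isInducedP4 hZ2 (.map f (u := 2) (v := 0) (by decide)) h₂ h₀
    exact row_one.elim h₁ h₅
  · have h₁ : ¬ G.Adj a (f 1) :=
      not_adj_of_indep hK13 (by decide) (by decide) (by decide) h₂ h₇
    have h₃ : ¬ G.Adj a (f 3) :=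
      not_adj_of_indep hK13 (by decide) (by decide) (by decide) h₀ h₇
    have row_one : G.Adj a (f 1) ∨ G.Adj a (f 3) :=
      adj_or_adj_of_isInducedP4 hZ2 (.map f (u := 4) (v := 0) (by decide)) h₄ h₀
    exact row_one.elim h₁ h₃

lemma not_adj_two (hK13 : ¬ ContainsInduced G K13) (hZ2 : ¬ ContainsInduced G (Zgraph 2))
    (f : HGraph7 ↪g G) (ha : a ∉ Set.range f) : ¬ G.Adj a (f 2) := by
  intro h₂
  have row_or_column : (G.Adj a (f 0) ∧ G.Adj a (f 4)) ∨ (G.Adj a (f 6) ∧ G.Adj a (f 3)) := by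
    have h₀₆ : G.Adj a (f 0) ∨ G.Adj a (f 6) :=
      adj_or_adj_of_adj_center hK13 ha (by decide) (by decide) (by decide) h₂
    have h₀₃ : G.Adj a (f 0) ∨ G.Adj a (f 3) :=
      adj_or_adj_of_adj_center hK13 ha (by decide) (by decide) (by decide) h₂
    have h₄₆ : G.Adj a (f 4) ∨ G.Adj a (f 6) :=
      adj_or_adj_of_adj_center hK13 ha (by decide) (by decide) (by decide) h₂
    have h₄₃ : G.Adj a (f 4) ∨ G.Adj a (f 3) :=
      adj_or_adj_of_adj_center hK13 ha (by decide) (by decide) (by decide) h₂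
    tauto
  rcases row_or_column with ⟨h₀, h₄⟩ | ⟨h₆, h₃⟩
  · exact not_adj_four_of_adj_zero_of_adj_two hK13 hZ2 f h₀ h₂ h₄
  · let f' : HGraph7 ↪g G := f.comp HGraph7.transpose.toEmbedding
    exact not_adj_four_of_adj_zero_of_adj_two hK13 hZ2 f' h₆ h₂ h₃

lemma not_adj_of_degree_eq_four (hK13 : ¬ ContainsInduced G K13)
    (hZ2 : ¬ ContainsInduced G (Zgraph 2)) (f : HGraph7 ↪g G) (ha : a ∉ Set.range f) {i : Fin 8}
    (hi : HGraph7.degree i = 4) : ¬ G.Adj a (f i) := by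
  obtain ⟨φ, rfl⟩ := HGraph7.exists_iso_apply_two_of_degree_eq_four hi
  exact not_adj_two hK13 hZ2 (f.comp φ.toEmbedding) fun ⟨j, hj⟩ => ha ⟨φ j, hj⟩

lemma adj_iff_of_exists_adj (hK13 : ¬ ContainsInduced G K13)
    (hZ2 : ¬ ContainsInduced G (Zgraph 2)) (f : HGraph7 ↪g G) (ha : a ∉ Set.range f)
    (hnbr : ∃ b ∈ Set.range f, G.Adj a b) (j : Fin 8) :
    G.Adj a (f j) ↔ j = 0 ∨ j = 1 ∨ j = 6 ∨ j = 7 := by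
  have h₂ : ¬ G.Adj a (f 2) := not_adj_of_degree_eq_four hK13 hZ2 f ha (by decide)
  have h₃ : ¬ G.Adj a (f 3) := not_adj_of_degree_eq_four hK13 hZ2 f ha (by decide)
  have h₄ : ¬ G.Adj a (f 4) := not_adj_of_degree_eq_four hK13 hZ2 f ha (by decide)
  have h₅ : ¬ G.Adj a (f 5) := not_adj_of_degree_eq_four hK13 hZ2 f ha (by decide)
  have mate {i k l : Fin 8} (hik : HGraph7.Adj i k) (hil : HGraph7.Adj i l)
      (hkl : HGraph7ᶜ.Adj k l) (hl : ¬ G.Adj a (f l)) (hi : G.Adj a (f i)) : G.Adj a (f k) :=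
    (adj_or_adj_of_adj_center hK13 ha hik hil hkl hi).resolve_right hl
  have h₀₁ : G.Adj a (f 0) → G.Adj a (f 1) := mate (by decide) (by decide) (by decide) h₂
  have h₁₀ : G.Adj a (f 1) → G.Adj a (f 0) := mate (by decide) (by decide) (by decide) h₃
  have h₆₇ : G.Adj a (f 6) → G.Adj a (f 7) := mate (by decide) (by decide) (by decide) h₂
  have h₇₆ : G.Adj a (f 7) → G.Adj a (f 6) := mate (by decide) (by decide) (by decide) h₄
  have h₀₆ (h₀ : G.Adj a (f 0)) : G.Adj a (f 6) :=
    (adj_or_adj_of_isInducedP4 hZ2 (.map f (u := 1) (by decide)) (h₀₁ h₀) h₀).resolve_left h₂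
  have h₆₀ (h₆ : G.Adj a (f 6)) : G.Adj a (f 0) :=
    (adj_or_adj_of_isInducedP4 hZ2 (.map f (u := 7) (by decide)) (h₆₇ h₆) h₆).resolve_left h₂
  have outer : (G.Adj a (f 0) ∧ G.Adj a (f 1)) ∧ G.Adj a (f 6) ∧ G.Adj a (f 7) := by
    obtain ⟨_, ⟨i, rfl⟩, hi⟩ := hnbr
    fin_cases i <;> grind
  obtain ⟨⟨h₀, h₁⟩, h₆, h₇⟩ := outer
  fin_cases j <;> simp [h₀, h₁, h₂, h₃, h₄, h₅, h₆, h₇]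

end Neighbors

theorem stmt11_general {V : Type*} (G : SimpleGraph V)
    (hK13 : ¬ ContainsInduced G K13) (hZ2 : ¬ ContainsInduced G (Zgraph 2))
    (f : HGraph7 ↪g G) (a : V) (ha : a ∉ Set.range ⇑f)
    (hnbr : ∃ b ∈ Set.range ⇑f, G.Adj a b) :
    (∀ j : Fin 8, G.Adj a (f j) ↔ (j = 0 ∨ j = 1 ∨ j = 6 ∨ j = 7)) ∧
    Nonempty ((G.induce (Set.range ⇑f ∪ {a})) ≃g HGraph8) := by
  have hadj := adj_iff_of_exists_adj hK13 hZ2 f ha hnbr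
  exact ⟨hadj, nonempty_iso_induce_range_union_singleton ha HGraph8.adj_castSucc_castSucc
    fun j => (HGraph8.adj_last_castSucc j).trans (hadj j).symm⟩

/-- **Lemma 2.8 (Statement 11).** Let `G` be a connected `{K_{1,3}, Z₂, N}`-free graph
containing an induced copy `H` of `H₇` (given by the embedding `f`, with `yᵢ = f (i-1)`).
Then every `a ∈ V(G) − V(H)` with `N_G(a) ∩ V(H) ≠ ∅` satisfies
`N_G(a) ∩ V(H) = {y₁, y₂, y₇, y₈}`; consequently `G[V(H) ∪ {a}] ≅ H₈`. -/
theorem stmt11 {V : Type*} [Fintype V] (G : SimpleGraph V) (hconn : G.Connected)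
    (hK13 : ¬ ContainsInduced G K13) (hZ2 : ¬ ContainsInduced G (Zgraph 2))
    (hN : ¬ ContainsInduced G Ngraph)
    (f : HGraph7 ↪g G) (a : V) (ha : a ∉ Set.range ⇑f)
    (hnbr : ∃ b ∈ Set.range ⇑f, G.Adj a b) :
    (∀ j : Fin 8, G.Adj a (f j) ↔ (j = 0 ∨ j = 1 ∨ j = 6 ∨ j = 7)) ∧
    Nonempty ((G.induce (Set.range ⇑f ∪ {a})) ≃g HGraph8) := by
  exact stmt11_general G hK13 hZ2 f a ha hnbr
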